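/- Let m>0, let k denote the continuous extension to the closed upper half-plane of the branch of √(z²−m²) with Im k(z)>0 for Im z>0, let ζ∈C_c^∞(ℝ), and fix x∈ℝ. For ε≥0 set M̌_{x,ε}(t) = (1/2π)∫_ℝ e^{ik(ω+iε)|x|} ζ(ω) e^{−iωt} dω. Then ‖M̌_{x,ε} − M̌_{x,0}‖_{L¹(ℝ)} → 0 as ε→0+. -/

import Mathlib

open MeasureTheory Filter
open scoped ENNReal Topology

noncomputable section

open scoped Classical in
/-- The continuous extension to the closed upper half-plane of the branch
`k(z) = √(z²−m²)` with `Im k(z) > 0` for `Im z > 0`: in the open upper half-plane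
`k(z) = i(m²−z²)^{1/2}` (principal power), and on the real axis
`k(ω) = √(ω²−m²)` for `ω ≥ m`, `k(ω) = −√(ω²−m²)` for `ω ≤ −m`,
and `k(ω) = i√(m²−ω²)` for `|ω| ≤ m`. -/
def kCl (m : ℝ) (w : ℂ) : ℂ :=
  if 0 < w.im then Complex.I * (((m:ℂ)^2 - w^2) ^ ((1:ℂ)/2))
  else if m ≤ w.re then ((Real.sqrt (w.re^2 - m^2) : ℝ) : ℂ)
  else if w.re ≤ -m then -((Real.sqrt (w.re^2 - m^2) : ℝ) : ℂ)
  else Complex.I * ((Real.sqrt (m^2 - w.re^2) : ℝ) : ℂ)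

/-! On the closed upper half-plane `k(w) = √(w + m) √(w - m)` with principal roots. Each root maps
into the closed first quadrant, where `‖z - w‖² ≤ ‖z² - w²‖`, so it is `1/2`-Hölder; hence `k` and
the phase `e^{ik|x|}` are `1/2`-Hölder on compact sets up to the real axis, uniformly in `ε`.
The `ω`-derivative of `e^{ik(ω+iε)|x|} ζ(ω)` is a Hölder function divided by `k`. Since
`‖k‖ ^ (-3/2)` is dominated by a locally integrable function independent of `ε`, these derivatives
have an `L¹` modulus of continuity `O(|h| ^ (1/4))`, uniformly in `ε`. Translation by half a period
then gives the integrable bound `O(|ξ| ^ (-5/4))` for all the Fourier transforms at once, and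
dominated convergence upgrades pointwise to `L¹` convergence. -/

section UpperHalfPlaneSqrt

open Complex

lemma complexSqrt_sq (z : ℂ) : sqrt z ^ 2 = z :=
  cpow_ofNat_inv_pow z 2

lemma norm_complexSqrt_sq (z : ℂ) : ‖sqrt z‖ ^ 2 = ‖z‖ := by
  rw [← norm_pow, complexSqrt_sq]

lemma complexSqrt_re_nonneg (z : ℂ) : 0 ≤ (sqrt z).re := by
  rw [Complex.sqrt, cpow_inv_two_re]
  positivity

lemma complexSqrt_im_nonneg {z : ℂ} (hz : 0 ≤ z.im) : 0 ≤ (sqrt z).im := by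
  rw [Complex.sqrt, cpow_inv_two_im_eq_sqrt hz]
  positivity

lemma complexSqrt_re_pos {z : ℂ} (hz : z ∈ slitPlane) : 0 < (sqrt z).re := by
  refine (complexSqrt_re_nonneg z).lt_of_ne' fun hre ↦ ?_
  have him : sqrt z = (sqrt z).im * I := by
    conv_lhs => rw [← re_add_im (sqrt z), hre, ofReal_zero, zero_add]
  have hneg : z = ((-(sqrt z).im ^ 2 : ℝ) : ℂ) := by
    conv_lhs => rw [← complexSqrt_sq z, him, mul_pow, I_sq]
    push_cast
    ring
  rw [hneg, ofReal_mem_slitPlane] at hz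
  linarith [sq_nonneg (sqrt z).im]

lemma complexSqrt_im_pos {z : ℂ} (hz : 0 < z.im) : 0 < (sqrt z).im := by
  have him : z.im = 2 * (sqrt z).re * (sqrt z).im := by
    conv_lhs => rw [← complexSqrt_sq z]
    rw [sq, mul_im]
    ring
  exact pos_of_mul_pos_right (him ▸ hz) (by linarith [complexSqrt_re_nonneg z])

lemma sq_norm_sub_le_norm_sq_sub_sq {z w : ℂ} (hz : 0 ≤ z.re) (hz' : 0 ≤ z.im)
    (hw : 0 ≤ w.re) (hw' : 0 ≤ w.im) : ‖z - w‖ ^ 2 ≤ ‖z ^ 2 - w ^ 2‖ := by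
  have hle : ‖z - w‖ ≤ ‖z + w‖ := by
    refine (sq_le_sq₀ (norm_nonneg _) (norm_nonneg _)).mp ?_
    rw [← normSq_eq_norm_sq, ← normSq_eq_norm_sq, normSq_apply, normSq_apply]
    simp only [sub_re, sub_im, add_re, add_im]
    nlinarith [mul_nonneg hz hw, mul_nonneg hz' hw']
  rw [sq_sub_sq, norm_mul, sq]
  gcongr

lemma holderOnWith_complexSqrt : HolderOnWith 1 2⁻¹ sqrt {z : ℂ | 0 ≤ z.im} := by
  intro z hz w hw
  have hsq : ‖sqrt z - sqrt w‖ ^ 2 ≤ ‖z - w‖ := by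
    simpa only [complexSqrt_sq] using sq_norm_sub_le_norm_sq_sub_sq (complexSqrt_re_nonneg z)
      (complexSqrt_im_nonneg hz) (complexSqrt_re_nonneg w) (complexSqrt_im_nonneg hw)
  have hle : ‖sqrt z - sqrt w‖ ≤ ‖z - w‖ ^ (2⁻¹ : ℝ) := by
    rw [← one_div, ← Real.sqrt_eq_rpow]
    exact Real.le_sqrt_of_sq_le hsq
  rw [edist_eq_enorm_sub, edist_eq_enorm_sub, ENNReal.coe_one, one_mul, NNReal.coe_inv,
    NNReal.coe_ofNat, ← ofReal_norm, ← ofReal_norm,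
    ENNReal.ofReal_rpow_of_nonneg (norm_nonneg _) (by norm_num)]
  exact ENNReal.ofReal_le_ofReal hle

lemma hasDerivAt_complexSqrt {z : ℂ} (hz : z ∈ slitPlane) :
    HasDerivAt sqrt (2 * sqrt z)⁻¹ z := by
  refine (hasDerivAt_id z).cpow_const (c := 2⁻¹) hz |>.congr_deriv ?_
  rw [show (2⁻¹ : ℂ) - 1 = -2⁻¹ by norm_num, cpow_neg, mul_inv, Complex.sqrt, mul_one, id]

end UpperHalfPlaneSqrt

section HalfPlaneBranch

open Complex

lemma eq_of_sq_eq_sq_of_im_pos {z w : ℂ} (hz : 0 < z.im) (hw : 0 < w.im)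
    (h : z ^ 2 = w ^ 2) : z = w := by
  refine (sq_eq_sq_iff_eq_or_eq_neg.mp h).resolve_right fun hneg ↦ ?_
  rw [hneg, neg_im] at hz
  linarith

variable {m : ℝ} {w : ℂ}

lemma mem_slitPlane_of_im_pos (hw : 0 < w.im) : w ∈ slitPlane :=
  mem_slitPlane_iff.mpr (.inr hw.ne')

lemma im_complexSqrt_mul_complexSqrt_pos (m : ℝ) (hw : 0 < w.im) :
    0 < (sqrt (w + m) * sqrt (w - m)).im := by
  have hadd : 0 < (w + m).im := by simpa using hw
  have hsub : 0 < (w - m).im := by simpa using hw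
  rw [mul_im]
  exact add_pos
    (mul_pos (complexSqrt_re_pos (mem_slitPlane_of_im_pos hadd)) (complexSqrt_im_pos hsub))
    (mul_pos (complexSqrt_im_pos hadd) (complexSqrt_re_pos (mem_slitPlane_of_im_pos hsub)))

lemma sq_sub_sq_mem_slitPlane (m : ℝ) (hm : m ≠ 0) (hw : 0 < w.im) :
    (m : ℂ) ^ 2 - w ^ 2 ∈ slitPlane := by
  rw [mem_slitPlane_iff]
  simp only [sq, sub_re, sub_im, mul_re, mul_im, ofReal_re, ofReal_im]
  by_cases hre : w.re = 0
  · left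
    rw [hre]
    nlinarith [sq_pos_of_ne_zero hm, sq_nonneg w.im]
  · right
    have := mul_ne_zero hre hw.ne'
    contrapose! this
    linarith

lemma complexSqrt_ofReal_of_nonneg {x : ℝ} (hx : 0 ≤ x) : sqrt (x : ℂ) = √x := by
  rw [sqrt_of_nonneg (by exact_mod_cast hx), ofReal_re]

lemma complexSqrt_ofReal_of_nonpos {x : ℝ} (hx : x ≤ 0) : sqrt (x : ℂ) = I * √(-x) := by
  rw [← neg_neg (x : ℂ), sqrt_neg_of_nonneg (by exact_mod_cast neg_nonneg.mpr hx), ← ofReal_neg,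
    complexSqrt_ofReal_of_nonneg (neg_nonneg.mpr hx)]

lemma kCl_eq_mul_of_im_pos (hm : m ≠ 0) (hw : 0 < w.im) :
    kCl m w = sqrt (w + m) * sqrt (w - m) := by
  have hk : kCl m w = I * sqrt ((m : ℂ) ^ 2 - w ^ 2) := by
    rw [kCl, if_pos hw, one_div, Complex.sqrt]
  rw [hk]
  refine eq_of_sq_eq_sq_of_im_pos ?_ (im_complexSqrt_mul_complexSqrt_pos m hw) ?_
  · simpa only [I_mul_im] using complexSqrt_re_pos (sq_sub_sq_mem_slitPlane m hm hw)
  · rw [mul_pow, mul_pow, I_sq, complexSqrt_sq, complexSqrt_sq, complexSqrt_sq]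
    ring

lemma kCl_ofReal_eq_mul (hm : 0 ≤ m) (ω : ℝ) :
    kCl m ω = sqrt ((ω + m : ℝ) : ℂ) * sqrt ((ω - m : ℝ) : ℂ) := by
  rw [kCl, if_neg (by simp)]
  simp only [ofReal_re]
  split_ifs with hright hleft
  · rw [complexSqrt_ofReal_of_nonneg (by linarith), complexSqrt_ofReal_of_nonneg (by linarith),
      ← ofReal_mul, ← Real.sqrt_mul (by linarith)]
    ring_nf
  · rw [complexSqrt_ofReal_of_nonpos (by linarith), complexSqrt_ofReal_of_nonpos (by linarith),
      mul_mul_mul_comm, I_mul_I, neg_one_mul, ← ofReal_mul, ← Real.sqrt_mul (by linarith)]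
    ring_nf
  · rw [complexSqrt_ofReal_of_nonneg (by linarith), complexSqrt_ofReal_of_nonpos (by linarith),
      mul_left_comm, ← ofReal_mul, ← Real.sqrt_mul (by linarith)]
    ring_nf

lemma kCl_eq_mul (hm : 0 < m) (hw : 0 ≤ w.im) : kCl m w = sqrt (w + m) * sqrt (w - m) := by
  rcases hw.eq_or_lt with him | him
  · obtain ⟨ω, rfl⟩ : ∃ ω : ℝ, w = ω := ⟨w.re, Complex.ext rfl him.symm⟩
    rw [kCl_ofReal_eq_mul hm.le, ofReal_add, ofReal_sub]
  · exact kCl_eq_mul_of_im_pos hm.ne' him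

lemma norm_kCl_sq (hm : 0 < m) (hw : 0 ≤ w.im) : ‖kCl m w‖ ^ 2 = ‖w + m‖ * ‖w - m‖ := by
  rw [kCl_eq_mul hm hw, norm_mul, mul_pow, norm_complexSqrt_sq, norm_complexSqrt_sq]

lemma kCl_im_nonneg (hm : 0 < m) (hw : 0 ≤ w.im) : 0 ≤ (kCl m w).im := by
  rw [kCl_eq_mul hm hw, mul_im]
  exact add_nonneg
    (mul_nonneg (complexSqrt_re_nonneg _) (complexSqrt_im_nonneg (by simpa using hw)))
    (mul_nonneg (complexSqrt_im_nonneg (by simpa using hw)) (complexSqrt_re_nonneg _))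

lemma kCl_ne_zero (hm : m ≠ 0) (hw : 0 < w.im) : kCl m w ≠ 0 := by
  intro h
  have := im_complexSqrt_mul_complexSqrt_pos m hw
  rw [← kCl_eq_mul_of_im_pos hm hw, h, zero_im] at this
  exact this.false

lemma hasDerivAt_kCl (hm : m ≠ 0) (hw : 0 < w.im) : HasDerivAt (kCl m) (w / kCl m w) w := by
  have hprod : kCl m =ᶠ[𝓝 w] fun z ↦ sqrt (z + m) * sqrt (z - m) := by
    filter_upwards [(isOpen_lt continuous_const continuous_im).mem_nhds hw] with z hz
      using kCl_eq_mul_of_im_pos hm hz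
  have hadd : HasDerivAt (fun z ↦ sqrt (z + m)) (2 * sqrt (w + m))⁻¹ w :=
    (hasDerivAt_complexSqrt (mem_slitPlane_of_im_pos (by simpa using hw))).comp_add_const _ _
  have hsub : HasDerivAt (fun z ↦ sqrt (z - m)) (2 * sqrt (w - m))⁻¹ w :=
    (hasDerivAt_complexSqrt (mem_slitPlane_of_im_pos (by simpa using hw))).comp_sub_const _ _
  have hne := kCl_ne_zero hm hw
  rw [kCl_eq_mul_of_im_pos hm hw] at hne ⊢
  refine ((hadd.mul hsub).congr_of_eventuallyEq hprod).congr_deriv ?_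
  have hp := left_ne_zero_of_mul hne
  have hq := right_ne_zero_of_mul hne
  field_simp
  rw [complexSqrt_sq, complexSqrt_sq]
  ring

end HalfPlaneBranch

section HolderOnCompact

open scoped NNReal

/-- Hölder continuity of exponent `r` on `s`, with an unspecified constant. -/
def IsHolderOn {X Y : Type*} [PseudoEMetricSpace X] [PseudoEMetricSpace Y] (r : ℝ≥0) (f : X → Y)
    (s : Set X) : Prop :=
  ∃ C, HolderOnWith C r f s

namespace IsHolderOn

lemma iff_exists_dist_le {X Y : Type*} [PseudoMetricSpace X] [PseudoMetricSpace Y] {r : ℝ≥0}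
    {f : X → Y} {s : Set X} :
    IsHolderOn r f s ↔
      ∃ C : ℝ, 0 ≤ C ∧ ∀ x ∈ s, ∀ y ∈ s, dist (f x) (f y) ≤ C * dist x y ^ (r : ℝ) := by
  refine ⟨fun ⟨C, hC⟩ ↦ ⟨C, C.2, fun x hx y hy ↦ hC.dist_le hx hy⟩, fun ⟨C, hC0, hC⟩ ↦ ?_⟩
  refine ⟨⟨C, hC0⟩, fun x hx y hy ↦ ?_⟩
  have h := ENNReal.ofReal_le_ofReal (hC x hx y hy)
  rwa [ENNReal.ofReal_mul hC0, ← ENNReal.ofReal_rpow_of_nonneg dist_nonneg r.coe_nonneg,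
    ← edist_dist, ← edist_dist, ENNReal.ofReal_eq_coe_nnreal hC0] at h

section Metric

variable {X Y Z : Type*} [PseudoMetricSpace X] [PseudoMetricSpace Y] [PseudoMetricSpace Z]
  {r r' : ℝ≥0} {f : X → Y} {s : Set X}

lemma continuousOn (hf : IsHolderOn r f s) (hr : 0 < r) : ContinuousOn f s :=
  hf.choose_spec.continuousOn hr

lemma mono {t : Set X} (hf : IsHolderOn r f s) (h : t ⊆ s) : IsHolderOn r f t :=
  hf.imp fun _ hC ↦ hC.mono h

lemma congr {g : X → Y} (hf : IsHolderOn r f s) (h : Set.EqOn g f s) : IsHolderOn r g s :=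
  hf.imp fun _ hC x hx y hy ↦ by simpa only [h hx, h hy] using hC x hx y hy

lemma const (c : Y) (s : Set X) : IsHolderOn r (fun _ ↦ c) s :=
  ⟨0, fun x _ y _ ↦ by simp⟩

lemma of_lipschitzWith {K : ℝ≥0} (hf : LipschitzWith K f) (s : Set X) : IsHolderOn 1 f s :=
  ⟨K, holderOnWith_one.mpr hf.lipschitzOnWith⟩

lemma of_le (hf : IsHolderOn r f s) (hs : Bornology.IsBounded s) (hr : r' ≤ r) :
    IsHolderOn r' f s := by
  obtain ⟨C, hC⟩ := hf
  obtain ⟨D, hD⟩ := Metric.isBounded_iff_nndist.mp hs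
  have hD' : ∀ x ∈ s, ∀ y ∈ s, edist x y ≤ D := fun x hx y hy ↦ by
    rw [edist_nndist]
    exact_mod_cast hD hx hy
  exact ⟨_, hC.of_le hD' hr⟩

lemma comp_lipschitzOnWith {K : ℝ≥0} {g : Y → Z} {t : Set Y} (hg : LipschitzOnWith K g t)
    (hf : IsHolderOn r f s) (hst : Set.MapsTo f s t) : IsHolderOn r (g ∘ f) s := by
  obtain ⟨C, hC⟩ := hf
  exact ⟨_, one_mul r ▸ (holderOnWith_one.mpr hg).comp hC hst⟩

end Metric

variable {X R : Type*} [PseudoMetricSpace X] {r : ℝ≥0} {s : Set X}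

lemma add [SeminormedAddCommGroup R] {f g : X → R} (hf : IsHolderOn r f s)
    (hg : IsHolderOn r g s) : IsHolderOn r (fun x ↦ f x + g x) s := by
  obtain ⟨C, hC0, hC⟩ := iff_exists_dist_le.mp hf
  obtain ⟨D, hD0, hD⟩ := iff_exists_dist_le.mp hg
  refine iff_exists_dist_le.mpr ⟨C + D, add_nonneg hC0 hD0, fun x hx y hy ↦ ?_⟩
  rw [add_mul]
  exact (dist_add_add_le _ _ _ _).trans (add_le_add (hC x hx y hy) (hD x hx y hy))

lemma mul [SeminormedRing R] {f g : X → R} (hf : IsHolderOn r f s) (hg : IsHolderOn r g s)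
    (hs : IsCompact s) (hr : 0 < r) : IsHolderOn r (fun x ↦ f x * g x) s := by
  obtain ⟨A, hA⟩ := hs.exists_bound_of_continuousOn (hf.continuousOn hr)
  obtain ⟨B, hB⟩ := hs.exists_bound_of_continuousOn (hg.continuousOn hr)
  obtain ⟨C, hC0, hC⟩ := iff_exists_dist_le.mp hf
  obtain ⟨D, hD0, hD⟩ := iff_exists_dist_le.mp hg
  refine iff_exists_dist_le.mpr ⟨|A| * D + C * |B|, by positivity, fun x hx y hy ↦ ?_⟩
  calc dist (f x * g x) (f y * g y)
      ≤ ‖f x‖ * dist (g x) (g y) + dist (f x) (f y) * ‖g y‖ := by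
        simp only [dist_eq_norm]
        rw [show f x * g x - f y * g y = f x * (g x - g y) + (f x - f y) * g y by noncomm_ring]
        exact (norm_add_le _ _).trans (add_le_add (norm_mul_le _ _) (norm_mul_le _ _))
    _ ≤ |A| * (D * dist x y ^ (r : ℝ)) + C * dist x y ^ (r : ℝ) * |B| := by
        gcongr
        exacts [(hA x hx).trans (le_abs_self A), hD x hx y hy, hC x hx y hy,
          (hB y hy).trans (le_abs_self B)]
    _ = (|A| * D + C * |B|) * dist x y ^ (r : ℝ) := by ring

end IsHolderOn

lemma norm_inv_sub_inv_le_rpow {x y : ℂ} (hx : x ≠ 0) (hy : y ≠ 0) {α : ℝ} (hα : α ∈ Set.Icc 0 1) :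
    ‖x⁻¹ - y⁻¹‖ ≤ 2 * ‖x - y‖ ^ α * (‖x‖ ^ (-(1 + α)) + ‖y‖ ^ (-(1 + α))) := by
  obtain ⟨hα0, hα1⟩ := hα
  set p := ‖x‖⁻¹ with hp
  set q := ‖y‖⁻¹ with hq
  have hp0 : 0 < p := by positivity
  have hq0 : 0 < q := by positivity
  have hsum : ‖x⁻¹ - y⁻¹‖ ≤ p + q := by
    simpa only [norm_inv] using norm_sub_le x⁻¹ y⁻¹
  have hprod : ‖x⁻¹ - y⁻¹‖ ≤ ‖x - y‖ * (p + q) ^ (2 : ℝ) := by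
    rw [inv_sub_inv hx hy, norm_div, norm_mul, norm_sub_rev, div_eq_mul_inv, mul_inv,
      Real.rpow_two]
    gcongr
    nlinarith
  -- Interpolate between the two bounds on `‖x⁻¹ - y⁻¹‖`.
  calc ‖x⁻¹ - y⁻¹‖ = ‖x⁻¹ - y⁻¹‖ ^ α * ‖x⁻¹ - y⁻¹‖ ^ (1 - α) := by
        rw [← Real.rpow_add_of_nonneg (norm_nonneg _) hα0 (by linarith), add_sub_cancel,
          Real.rpow_one]
    _ ≤ (‖x - y‖ * (p + q) ^ (2 : ℝ)) ^ α * (p + q) ^ (1 - α) := by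
        gcongr
    _ = ‖x - y‖ ^ α * (p + q) ^ (1 + α) := by
        rw [Real.mul_rpow (by positivity) (by positivity), ← Real.rpow_mul (by positivity),
          mul_assoc, ← Real.rpow_add (by positivity)]
        ring_nf
    _ ≤ ‖x - y‖ ^ α * (2 * (p ^ (1 + α) + q ^ (1 + α))) := by
        gcongr
        have hpow : (p + q) ^ (1 + α) ≤ 2 ^ (1 + α - 1) * (p ^ (1 + α) + q ^ (1 + α)) :=
          mod_cast NNReal.rpow_add_le_mul_rpow_add_rpow ⟨p, hp0.le⟩ ⟨q, hq0.le⟩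
            (le_add_of_nonneg_right hα0)
        refine hpow.trans ?_
        gcongr
        simpa using Real.rpow_le_rpow_of_exponent_le one_le_two hα1
    _ = _ := by
        rw [hp, hq, Real.inv_rpow (norm_nonneg _), Real.inv_rpow (norm_nonneg _),
          ← Real.rpow_neg (norm_nonneg _), ← Real.rpow_neg (norm_nonneg _)]
        ring

/-- The price of dividing by `k` near its zeros is the weight `‖k‖ ^ (-(1 + α))`; a smaller `α`
gives a milder weight and a worse Hölder exponent `α r`. -/
lemma IsHolderOn.exists_norm_div_sub_div_le {X : Type*} [PseudoMetricSpace X] {s : Set X}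
    {H k : X → ℂ} {r α : ℝ≥0} (hH : IsHolderOn (α * r) H s) (hk : IsHolderOn r k s)
    (hs : IsCompact s) (hr : 0 < r) (hα : 0 < α) (hα1 : α ≤ 1) :
    ∃ C, 0 ≤ C ∧ ∀ x ∈ s, ∀ y ∈ s, k x ≠ 0 → k y ≠ 0 → ‖H x / k x - H y / k y‖ ≤
      C * dist x y ^ (α * r : ℝ) * (‖k x‖ ^ (-(1 + α : ℝ)) + ‖k y‖ ^ (-(1 + α : ℝ))) := by
  obtain ⟨A, hA⟩ := hs.exists_bound_of_continuousOn (hH.continuousOn (mul_pos hα hr))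
  obtain ⟨B, hB⟩ := hs.exists_bound_of_continuousOn (hk.continuousOn hr)
  obtain ⟨C, hC0, hC⟩ := iff_exists_dist_le.mp hH
  obtain ⟨D, hD0, hD⟩ := iff_exists_dist_le.mp hk
  refine ⟨C * |B| ^ (α : ℝ) + |A| * (2 * D ^ (α : ℝ)), by positivity,
    fun x hx y hy hkx hky ↦ ?_⟩
  set d := dist x y
  set W := ‖k x‖ ^ (-(1 + α : ℝ)) + ‖k y‖ ^ (-(1 + α : ℝ))
  have hnum : ‖H x - H y‖ ≤ C * d ^ (α * r : ℝ) := by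
    simpa only [dist_eq_norm, NNReal.coe_mul] using hC x hx y hy
  have hden : ‖k x - k y‖ ^ (α : ℝ) ≤ D ^ (α : ℝ) * d ^ (α * r : ℝ) := by
    rw [mul_comm (α : ℝ), Real.rpow_mul dist_nonneg, ← Real.mul_rpow hD0 (by positivity),
      ← dist_eq_norm]
    gcongr
    exact hD x hx y hy
  have hinv : ‖(k x)⁻¹‖ ≤ |B| ^ (α : ℝ) * W := by
    calc ‖(k x)⁻¹‖ = ‖k x‖ ^ (α : ℝ) * ‖k x‖ ^ (-(1 + α : ℝ)) := by
          rw [← Real.rpow_add (norm_pos_iff.mpr hkx), neg_add_rev, add_neg_cancel_left,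
            Real.rpow_neg_one, norm_inv]
      _ ≤ |B| ^ (α : ℝ) * W := by
          gcongr
          exacts [(hB x hx).trans (le_abs_self B), le_add_of_nonneg_right (by positivity)]
  calc ‖H x / k x - H y / k y‖
      = ‖(H x - H y) * (k x)⁻¹ + H y * ((k x)⁻¹ - (k y)⁻¹)‖ := by ring_nf
    _ ≤ ‖H x - H y‖ * ‖(k x)⁻¹‖ + ‖H y‖ * ‖(k x)⁻¹ - (k y)⁻¹‖ := by
        simpa only [norm_mul] using
          norm_add_le ((H x - H y) * (k x)⁻¹) (H y * ((k x)⁻¹ - (k y)⁻¹))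
    _ ≤ C * d ^ (α * r : ℝ) * (|B| ^ (α : ℝ) * W) +
          |A| * (2 * (D ^ (α : ℝ) * d ^ (α * r : ℝ)) * W) := by
        gcongr
        · exact (hA y hy).trans (le_abs_self A)
        · refine (norm_inv_sub_inv_le_rpow hkx hky ⟨α.2, hα1⟩).trans ?_
          exact mul_le_mul_of_nonneg_right (mul_le_mul_of_nonneg_left hden zero_le_two)
            (by positivity)
    _ = _ := by ring

end HolderOnCompact

section HalfPlaneRegularity

open Complex

lemma isHolderOn_complexSqrt_add_ofReal (c : ℝ) :
    IsHolderOn 2⁻¹ (fun w : ℂ ↦ sqrt (w + c)) {w | 0 ≤ w.im} := by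
  refine ⟨1, fun z hz w hw ↦ ?_⟩
  simpa only [edist_add_right] using
    holderOnWith_complexSqrt (x := z + c) (by simpa using hz) (y := w + c) (by simpa using hw)

lemma lipschitzOnWith_exp_re_nonpos : LipschitzOnWith 1 exp {z : ℂ | z.re ≤ 0} := by
  refine (convex_halfSpace_re_le 0).lipschitzOnWith_of_nnnorm_deriv_le
    (fun z _ ↦ differentiableAt_exp) fun z (hz : z.re ≤ 0) ↦ ?_
  rw [Complex.deriv_exp, ← NNReal.coe_le_coe, coe_nnnorm, norm_exp]
  exact Real.exp_le_one_iff.mpr hz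

variable {m a : ℝ} {s : Set ℂ}

lemma isHolderOn_kCl (hm : 0 < m) (hs : IsCompact s) (him : ∀ w ∈ s, 0 ≤ w.im) :
    IsHolderOn 2⁻¹ (kCl m) s := by
  have hroot (c : ℝ) : IsHolderOn 2⁻¹ (fun w : ℂ ↦ sqrt (w + c)) s :=
    (isHolderOn_complexSqrt_add_ofReal c).mono him
  refine ((hroot m).mul (hroot (-m)) hs (by norm_num)).congr fun w hw ↦ ?_
  rw [kCl_eq_mul hm (him w hw), ofReal_neg, sub_eq_add_neg]

lemma continuousOn_kCl (hm : 0 < m) : ContinuousOn (kCl m) {w | 0 ≤ w.im} := by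
  have hroot (c : ℝ) : ContinuousOn (fun w : ℂ ↦ sqrt (w + c)) {w | 0 ≤ w.im} :=
    (isHolderOn_complexSqrt_add_ofReal c).continuousOn (by norm_num)
  refine ((hroot m).mul (hroot (-m))).congr fun w hw ↦ ?_
  rw [kCl_eq_mul hm hw, ofReal_neg, sub_eq_add_neg, Pi.mul_apply]

/-- The phase factor `e^{ik(w)a}` of the multiplicator; the paper's distance `|x|` is `a`. -/
def phaseFactor (m a : ℝ) (w : ℂ) : ℂ :=
  exp (I * kCl m w * a)

lemma I_mul_kCl_mul_re_nonpos (hm : 0 < m) (ha : 0 ≤ a) {w : ℂ} (hw : 0 ≤ w.im) :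
    (I * kCl m w * a).re ≤ 0 := by
  rw [re_mul_ofReal, I_mul_re]
  exact mul_nonpos_of_nonpos_of_nonneg (neg_nonpos.mpr (kCl_im_nonneg hm hw)) ha

lemma norm_phaseFactor_le_one (hm : 0 < m) (ha : 0 ≤ a) {w : ℂ} (hw : 0 ≤ w.im) :
    ‖phaseFactor m a w‖ ≤ 1 := by
  rw [phaseFactor, norm_exp]
  exact Real.exp_le_one_iff.mpr (I_mul_kCl_mul_re_nonpos hm ha hw)

lemma continuousOn_phaseFactor (hm : 0 < m) (a : ℝ) :
    ContinuousOn (phaseFactor m a) {w | 0 ≤ w.im} :=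
  ((continuousOn_const.mul (continuousOn_kCl hm)).mul continuousOn_const).cexp

lemma isHolderOn_phaseFactor (hm : 0 < m) (ha : 0 ≤ a) (hs : IsCompact s)
    (him : ∀ w ∈ s, 0 ≤ w.im) : IsHolderOn 2⁻¹ (phaseFactor m a) s := by
  have hconst (c : ℂ) : IsHolderOn 2⁻¹ (fun _ ↦ c) s := .const c s
  have hexponent := ((hconst I).mul (isHolderOn_kCl hm hs him) hs (by norm_num)).mul
    (hconst a) hs (by norm_num)
  exact hexponent.comp_lipschitzOnWith lipschitzOnWith_exp_re_nonpos
    fun w hw ↦ I_mul_kCl_mul_re_nonpos hm ha (him w hw)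

lemma hasDerivAt_phaseFactor (hm : m ≠ 0) (a : ℝ) {w : ℂ} (hw : 0 < w.im) :
    HasDerivAt (phaseFactor m a) (phaseFactor m a w * (I * (w / kCl m w) * a)) w :=
  (((hasDerivAt_kCl hm hw).const_mul I).mul_const (a : ℂ)).cexp

/-- The Fourier-side multiplicator `e^{ik(ω+iε)a} ζ(ω)`, so that `M̌_{x,ε}` is its (rescaled)
Fourier transform. -/
def shiftedMultiplier (m a : ℝ) (ζ : ℝ → ℂ) (ε ω : ℝ) : ℂ :=
  phaseFactor m a (ω + I * ε) * ζ ω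

/-- `k` times the `ω`-derivative of `e^{ik(ω+iε)a} ζ(ω)`, written as a function of `w = ω + iε` so
that estimates are uniform in `ε`. -/
def derivNumerator (m a : ℝ) (ζ : ℝ → ℂ) (w : ℂ) : ℂ :=
  phaseFactor m a w * (I * a * w * ζ w.re + kCl m w * deriv ζ w.re)

variable {ζ : ℝ → ℂ} {ε : ℝ}

lemma hasDerivAt_shiftedMultiplier (hm : m ≠ 0) (hε : 0 < ε) {ω : ℝ}
    (hζ : DifferentiableAt ℝ ζ ω) :
    HasDerivAt (shiftedMultiplier m a ζ ε)
      (derivNumerator m a ζ (ω + I * ε) / kCl m (ω + I * ε)) ω := by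
  have him : 0 < ((ω : ℂ) + I * ε).im := by simpa using hε
  have hphase : HasDerivAt (fun x : ℝ ↦ phaseFactor m a (x + I * ε)) _ ω :=
    ((hasDerivAt_phaseFactor hm a him).comp_add_const (ω : ℂ) (I * ε)).comp_ofReal
  refine (hphase.mul hζ.hasDerivAt).congr_deriv ?_
  have hk := kCl_ne_zero hm him
  have hre : ((ω : ℂ) + I * ε).re = ω := by simp
  rw [derivNumerator, hre]
  field_simp

lemma continuous_shiftedMultiplier (hm : 0 < m) (hε : 0 ≤ ε) (hζ : Continuous ζ) :
    Continuous (shiftedMultiplier m a ζ ε) := by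
  have hphase : Continuous fun ω : ℝ ↦ phaseFactor m a (ω + I * ε) :=
    (continuousOn_phaseFactor hm a).comp_continuous (by fun_prop) fun ω ↦ by simpa using hε
  exact hphase.mul hζ

lemma norm_shiftedMultiplier_le (hm : 0 < m) (ha : 0 ≤ a) (hε : 0 ≤ ε) (ω : ℝ) :
    ‖shiftedMultiplier m a ζ ε ω‖ ≤ ‖ζ ω‖ := by
  rw [shiftedMultiplier, norm_mul]
  exact mul_le_of_le_one_left (norm_nonneg _)
    (norm_phaseFactor_le_one hm ha (by simpa using hε))

lemma tendsto_shiftedMultiplier (hm : 0 < m) (ω : ℝ) :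
    Tendsto (fun ε ↦ shiftedMultiplier m a ζ ε ω) (𝓝[>] 0) (𝓝 (shiftedMultiplier m a ζ 0 ω)) := by
  refine Tendsto.mul_const _ (((continuousOn_phaseFactor hm a) _ ?_).tendsto.comp ?_)
  · simp
  · refine tendsto_nhdsWithin_iff.mpr ⟨?_, ?_⟩
    · exact Tendsto.mono_left (Continuous.tendsto (by fun_prop) 0) nhdsWithin_le_nhds
    · filter_upwards [self_mem_nhdsWithin] with ε hε
      simpa using (Set.mem_Ioi.mp hε).le

lemma isHolderOn_derivNumerator (hm : 0 < m) (ha : 0 ≤ a) {K K' : NNReal}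
    (hζ : LipschitzWith K ζ) (hζ' : LipschitzWith K' (deriv ζ)) (hs : IsCompact s)
    (him : ∀ w ∈ s, 0 ≤ w.im) : IsHolderOn 2⁻¹ (derivNumerator m a ζ) s := by
  have hlip {L : NNReal} {f : ℂ → ℂ} (hf : LipschitzWith L f) : IsHolderOn 2⁻¹ f s :=
    (IsHolderOn.of_lipschitzWith hf s).of_le hs.isBounded (by norm_num)
  have hre : LipschitzWith 1 re := .of_dist_le_mul fun z w ↦ by
    simpa [dist_eq_norm] using abs_re_le_norm (z - w)
  have hlinear : IsHolderOn 2⁻¹ (fun w ↦ I * a * w) s :=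
    (IsHolderOn.const (I * a) s).mul (hlip .id) hs (by norm_num)
  have hphase := isHolderOn_phaseFactor hm ha hs him
  have hk := isHolderOn_kCl hm hs him
  exact hphase.mul ((hlinear.mul (hlip (hζ.comp hre)) hs (by norm_num)).add
    (hk.mul (hlip (hζ'.comp hre)) hs (by norm_num))) hs (by norm_num)

end HalfPlaneRegularity

section BranchPointWeight

open Complex

lemma locallyIntegrable_abs_sub_rpow_neg (c : ℝ) {s : ℝ} (hs : s < 1) :
    LocallyIntegrable fun ω : ℝ ↦ |ω - c| ^ (-s) := by
  have hzero : LocallyIntegrable fun ω : ℝ ↦ |ω| ^ (-s) :=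
    locallyIntegrable_of_norm_le_rpow (C := 1) (α := s) (by simp) (by simpa using hs)
      (ae_of_all _ fun ω ↦ by simp [abs_of_nonneg (Real.rpow_nonneg (abs_nonneg ω) _)])
      (by fun_prop : Measurable fun ω : ℝ ↦ |ω| ^ (-s)).aestronglyMeasurable
  refine (locallyIntegrable_iff).mpr fun t ht ↦ ?_
  have himage := hzero.integrableOn_isCompact (ht.image (continuous_sub_right c))
  exact (((measurePreserving_sub_right volume c).integrableOn_comp_preimage
    (measurableEmbedding_subRight c)).mpr himage).mono_set (Set.subset_preimage_image _ _)

/-- The weight `|ω - m| ^ (-s) + |ω + m| ^ (-s)`, singular at the branch points `±m`, which controls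
negative powers of `k(ω + iε)` uniformly in `ε`. -/
def branchWeight (m s ω : ℝ) : ℝ :=
  |ω - m| ^ (-s) + |ω + m| ^ (-s)

lemma branchWeight_nonneg (m s ω : ℝ) : 0 ≤ branchWeight m s ω := by
  unfold branchWeight
  positivity

lemma locallyIntegrable_branchWeight (m : ℝ) {s : ℝ} (hs : s < 1) :
    LocallyIntegrable (branchWeight m s) := by
  have hplus := locallyIntegrable_abs_sub_rpow_neg (-m) hs
  simp only [sub_neg_eq_add] at hplus
  exact (locallyIntegrable_abs_sub_rpow_neg m hs).add hplus

lemma norm_kCl_rpow_neg_le_branchWeight {m s ε ω : ℝ} (hm : 0 < m) (hs : 0 ≤ s) (hε : 0 ≤ ε)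
    (hω : |ω| ≠ m) :
    ‖kCl m (ω + I * ε)‖ ^ (-(2 * s)) ≤ m ^ (-s) * branchWeight m s ω := by
  have hminus : 0 < |ω - m| := abs_pos.mpr fun h ↦ hω (by rw [sub_eq_zero.mp h, abs_of_pos hm])
  have hplus : 0 < |ω + m| :=
    abs_pos.mpr fun h ↦ hω (by rw [eq_neg_of_add_eq_zero_left h, abs_neg, abs_of_pos hm])
  have hk : |ω + m| * |ω - m| ≤ ‖kCl m (ω + I * ε)‖ ^ 2 := by
    rw [norm_kCl_sq hm (by simpa using hε)]
    gcongr
    · simpa using abs_re_le_norm ((ω : ℂ) + I * ε + m)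
    · simpa using abs_re_le_norm ((ω : ℂ) + I * ε - m)
  have hpow : ‖kCl m (ω + I * ε)‖ ^ (-(2 * s)) ≤ |ω + m| ^ (-s) * |ω - m| ^ (-s) := by
    rw [← mul_neg, Real.rpow_mul (norm_nonneg _), Real.rpow_two,
      ← Real.mul_rpow (abs_nonneg _) (abs_nonneg _)]
    exact Real.rpow_le_rpow_of_nonpos (by positivity) hk (by linarith)
  -- The branch points are `2m` apart, so one of the two factors is at most `m ^ (-s)`.
  have hfar : m ≤ |ω + m| ∨ m ≤ |ω - m| := by
    rcases le_total 0 ω with h | h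
    · exact .inl ((le_add_of_nonneg_left h).trans (le_abs_self _))
    · exact .inr (by linarith [neg_abs_le (ω - m)])
  refine hpow.trans ?_
  rw [branchWeight, mul_add]
  rcases hfar with h | h
  · refine le_add_of_le_of_nonneg (mul_le_mul_of_nonneg_right ?_ (by positivity)) (by positivity)
    exact Real.rpow_le_rpow_of_nonpos hm h (by linarith)
  · rw [mul_comm]
    refine le_add_of_nonneg_of_le (by positivity) (mul_le_mul_of_nonneg_right ?_ (by positivity))
    exact Real.rpow_le_rpow_of_nonpos hm h (by linarith)

end BranchPointWeight

section DerivativeModulus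

open Complex

lemma integral_norm_sub_translate_le {E : Type*} [NormedAddCommGroup E] {g : ℝ → E} {Ψ : ℝ → ℝ}
    (hΨ : Integrable Ψ) {c h : ℝ} (hle : ∀ᵐ x, ‖g x - g (x + h)‖ ≤ c * (Ψ x + Ψ (x + h))) :
    ∫ x, ‖g x - g (x + h)‖ ≤ 2 * (∫ x, Ψ x) * c := by
  calc ∫ x, ‖g x - g (x + h)‖ ≤ ∫ x, c * (Ψ x + Ψ (x + h)) :=
        integral_mono_of_nonneg (ae_of_all _ fun _ ↦ norm_nonneg _)
          ((hΨ.add (hΨ.comp_add_right h)).const_mul c) hle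
    _ = 2 * (∫ x, Ψ x) * c := by
        rw [integral_const_mul, integral_add hΨ (hΨ.comp_add_right h),
          integral_add_right_eq_self]
        ring

lemma ae_abs_ne (m : ℝ) : ∀ᵐ x : ℝ, |x| ≠ m := by
  have hfinite : {x : ℝ | ¬|x| ≠ m} ⊆ {m, -m} := fun x hx ↦ eq_or_eq_neg_of_abs_eq (not_not.mp hx)
  exact measure_mono_null hfinite ((Set.toFinite _).measure_zero _)

variable {m a ε : ℝ} {ζ : ℝ → ℂ}

lemma continuous_deriv_shiftedMultiplier (hm : 0 < m) (hε : 0 < ε) (hζ : Differentiable ℝ ζ)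
    (hζ' : Continuous (deriv ζ)) : Continuous (deriv (shiftedMultiplier m a ζ ε)) := by
  have hpos : ∀ ω : ℝ, 0 < ((ω : ℂ) + I * ε).im := fun ω ↦ by simpa using hε
  have hk : Continuous fun ω : ℝ ↦ kCl m (ω + I * ε) :=
    (continuousOn_kCl hm).comp_continuous (by fun_prop) fun ω ↦ (hpos ω).le
  have hphase : Continuous fun ω : ℝ ↦ phaseFactor m a (ω + I * ε) :=
    (continuousOn_phaseFactor hm a).comp_continuous (by fun_prop) fun ω ↦ (hpos ω).le
  have hderiv : deriv (shiftedMultiplier m a ζ ε) = _ :=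
    funext fun ω ↦ (hasDerivAt_shiftedMultiplier hm.ne' hε (hζ ω)).deriv
  have hre : Continuous fun ω : ℝ ↦ ((ω : ℂ) + I * ε).re := by fun_prop
  rw [hderiv]
  refine .div (hphase.mul (.add ?_ (hk.mul (hζ'.comp hre)))) hk fun ω ↦
    kCl_ne_zero hm.ne' (hpos ω)
  exact .mul (by fun_prop) (hζ.continuous.comp hre)

lemma deriv_shiftedMultiplier_eq_zero (hm : m ≠ 0) (hε : 0 < ε) {ω : ℝ}
    (hζ : DifferentiableAt ℝ ζ ω) (hω : ω ∉ tsupport ζ) :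
    deriv (shiftedMultiplier m a ζ ε) ω = 0 := by
  rw [(hasDerivAt_shiftedMultiplier hm hε hζ).deriv, derivNumerator]
  simp [image_eq_zero_of_notMem_tsupport hω,
    Function.notMem_support.mp fun h ↦ hω (support_deriv_subset h)]

lemma exists_norm_deriv_shiftedMultiplier_sub_le (hm : 0 < m) (ha : 0 ≤ a)
    (hζ : Differentiable ℝ ζ) {K K' : NNReal} (hζ_lip : LipschitzWith K ζ)
    (hζ'_lip : LipschitzWith K' (deriv ζ)) (N : ℝ) :
    ∃ C, 0 ≤ C ∧ ∀ ε ∈ Set.Ioc (0 : ℝ) 1, ∀ x ∈ Set.Icc (-N) N, ∀ y ∈ Set.Icc (-N) N,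
      |x| ≠ m → |y| ≠ m →
      ‖deriv (shiftedMultiplier m a ζ ε) x - deriv (shiftedMultiplier m a ζ ε) y‖ ≤
        C * |x - y| ^ (1 / 4 : ℝ) * (branchWeight m (3 / 4) x + branchWeight m (3 / 4) y) := by
  set s : Set ℂ := Set.Icc (-N) N ×ℂ Set.Icc 0 1 with hs_def
  have hs : IsCompact s := isCompact_Icc.reProdIm isCompact_Icc
  have him : ∀ w ∈ s, 0 ≤ w.im := fun w hw ↦ hw.2.1
  have hnum := (isHolderOn_derivNumerator hm ha hζ_lip hζ'_lip hs him).of_le hs.isBounded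
    (r' := 2⁻¹ * 2⁻¹) (mul_le_of_le_one_left (by positivity) (by norm_num))
  obtain ⟨C, hC0, hC⟩ := hnum.exists_norm_div_sub_div_le (isHolderOn_kCl hm hs him) hs
    (by norm_num) (by norm_num) (by norm_num)
  refine ⟨C * m ^ (-(3 / 4) : ℝ), by positivity, fun ε hε x hx y hy hxm hym ↦ ?_⟩
  have hmem {u : ℝ} (hu : u ∈ Set.Icc (-N) N) : (u : ℂ) + I * ε ∈ s := by
    simpa [hs_def, mem_reProdIm] using ⟨hu, hε.1.le, hε.2⟩
  have hne (u : ℝ) : kCl m (u + I * ε) ≠ 0 := kCl_ne_zero hm.ne' (by simpa using hε.1)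
  have hdist : dist ((x : ℂ) + I * ε) (y + I * ε) = |x - y| := by
    rw [dist_add_right, dist_eq_norm, ← ofReal_sub, norm_real, Real.norm_eq_abs]
  have hweight {u : ℝ} (hu : |u| ≠ m) :
      ‖kCl m (u + I * ε)‖ ^ (-(1 + (2⁻¹ : NNReal)) : ℝ) ≤
        m ^ (-(3 / 4) : ℝ) * branchWeight m (3 / 4) u := by
    refine le_trans (le_of_eq ?_)
      (norm_kCl_rpow_neg_le_branchWeight hm (by norm_num) hε.1.le hu)
    norm_num
  rw [(hasDerivAt_shiftedMultiplier hm.ne' hε.1 (hζ x)).deriv,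
    (hasDerivAt_shiftedMultiplier hm.ne' hε.1 (hζ y)).deriv]
  refine (hC _ (hmem hx) _ (hmem hy) (hne x) (hne y)).trans ?_
  have hexp : ((2⁻¹ : NNReal) * (2⁻¹ : NNReal) : ℝ) = 1 / 4 := by norm_num
  rw [hdist, hexp, mul_right_comm C (m ^ _), mul_assoc (C * _) (m ^ _), mul_add (m ^ _)]
  gcongr
  exacts [hweight hxm, hweight hym]

lemma exists_integral_norm_deriv_sub_translate_le (hm : 0 < m) (ha : 0 ≤ a)
    (hζ : Differentiable ℝ ζ) {K : NNReal} (hζ'_lip : LipschitzWith K (deriv ζ))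
    (hsupp : HasCompactSupport ζ) :
    ∃ B : ℝ, ∀ ε ∈ Set.Ioc (0 : ℝ) 1, ∀ h : ℝ, |h| ≤ 1 →
      ∫ x, ‖deriv (shiftedMultiplier m a ζ ε) x - deriv (shiftedMultiplier m a ζ ε) (x + h)‖ ≤
        B * |h| ^ (1 / 4 : ℝ) := by
  obtain ⟨L, hζ_lip⟩ := ContDiff.lipschitzWith_of_hasCompactSupport hsupp
    (contDiff_one_iff_deriv.mpr ⟨hζ, hζ'_lip.continuous⟩) one_ne_zero
  obtain ⟨N, hN⟩ := hsupp.isBounded.subset_closedBall 0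
  obtain ⟨C, hC0, hC⟩ :=
    exists_norm_deriv_shiftedMultiplier_sub_le hm ha hζ hζ_lip hζ'_lip (N + 1)
  set J := Set.Icc (-(N + 1)) (N + 1)
  set Ψ := J.indicator (branchWeight m (3 / 4))
  have hΨ : Integrable Ψ :=
    ((locallyIntegrable_branchWeight m (by norm_num)).integrableOn_isCompact
      isCompact_Icc).integrable_indicator measurableSet_Icc
  have hΨ0 (x : ℝ) : 0 ≤ Ψ x := Set.indicator_nonneg (fun _ _ ↦ branchWeight_nonneg _ _ _) x
  refine ⟨2 * (∫ x, Ψ x) * C, fun ε hε h hh ↦ ?_⟩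
  set g := deriv (shiftedMultiplier m a ζ ε)
  have hzero {u : ℝ} (hu : N < |u|) : g u = 0 := by
    refine deriv_shiftedMultiplier_eq_zero hm.ne' hε.1 (hζ u) fun hmem ↦ ?_
    simpa [hu.not_ge] using hN hmem
  have hle : ∀ᵐ x, ‖g x - g (x + h)‖ ≤ C * |h| ^ (1 / 4 : ℝ) * (Ψ x + Ψ (x + h)) := by
    filter_upwards [ae_abs_ne m,
      (measurePreserving_add_right volume h).quasiMeasurePreserving.ae (ae_abs_ne m)] with x hx hxh
    by_cases hJ : x ∈ J ∧ x + h ∈ J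
    · have := hC ε hε x hJ.1 (x + h) hJ.2 hx hxh
      rwa [sub_add_cancel_left, abs_neg, ← Set.indicator_of_mem hJ.1 (branchWeight m (3 / 4)),
        ← Set.indicator_of_mem hJ.2 (branchWeight m (3 / 4))] at this
    · have hout : N < |x| ∧ N < |x + h| := by
        simp only [J, Set.mem_Icc, ← abs_le, not_and_or, not_le] at hJ
        have hx_le : |x| ≤ |x + h| + |h| := by simpa using abs_sub (x + h) h
        have hxh_le : |x + h| ≤ |x| + |h| := abs_add_le x h
        rcases hJ with hJ | hJ <;> constructor <;> linarith
      rw [hzero hout.1, hzero hout.2, sub_zero, norm_zero]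
      exact mul_nonneg (by positivity) (add_nonneg (hΨ0 _) (hΨ0 _))
  simpa only [mul_assoc] using integral_norm_sub_translate_le hΨ hle

end DerivativeModulus

section DominatedConvergence

lemma tendsto_integral_norm_sub_of_dominated {α E ι : Type*} [MeasurableSpace α] {μ : Measure α}
    [NormedAddCommGroup E] {l : Filter ι} [l.IsCountablyGenerated] {F : ι → α → E} {F₀ : α → E}
    {bound : α → ℝ} (hF : ∀ᶠ i in l, AEStronglyMeasurable (F i) μ)
    (hF₀ : AEStronglyMeasurable F₀ μ) (hbound : ∀ᶠ i in l, ∀ᵐ x ∂μ, ‖F i x‖ ≤ bound x)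
    (hbound₀ : ∀ᵐ x ∂μ, ‖F₀ x‖ ≤ bound x) (hint : Integrable bound μ)
    (hlim : ∀ᵐ x ∂μ, Tendsto (fun i ↦ F i x) l (𝓝 (F₀ x))) :
    Tendsto (fun i ↦ ∫ x, ‖F i x - F₀ x‖ ∂μ) l (𝓝 0) := by
  have hdom : ∀ᶠ i in l, ∀ᵐ x ∂μ, ‖‖F i x - F₀ x‖‖ ≤ bound x + bound x := by
    filter_upwards [hbound] with i hi
    filter_upwards [hi, hbound₀] with x hx hx₀
    rw [norm_norm]
    exact (norm_sub_le _ _).trans (add_le_add hx hx₀)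
  have htendsto := tendsto_integral_filter_of_dominated_convergence _
    (hF.mono fun i hi ↦ (hi.sub hF₀).norm) hdom (hint.add hint)
    (hlim.mono fun x hx ↦ tendsto_iff_norm_sub_tendsto_zero.mp hx)
  simpa only [integral_zero, Pi.sub_apply] using htendsto

end DominatedConvergence

section FourierDecay

open Real
open scoped FourierTransform

variable {E : Type*} [NormedAddCommGroup E] [NormedSpace ℂ E]

section InnerProductSpace

variable {V : Type*} [NormedAddCommGroup V] [InnerProductSpace ℝ V] [FiniteDimensional ℝ V]
  [MeasurableSpace V] [BorelSpace V] {f g : V → E}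

lemma norm_fourier_le_integral_norm (f : V → E) (w : V) : ‖𝓕 f w‖ ≤ ∫ v, ‖f v‖ :=
  VectorFourier.norm_fourierIntegral_le_integral_norm _ _ _ f w

lemma continuous_fourier_of_integrable (hf : Integrable f) : Continuous (𝓕 f) :=
  VectorFourier.fourierIntegral_continuous continuous_fourierChar continuous_inner hf

lemma norm_fourier_sub_le (hf : Integrable f) (hg : Integrable g) (w : V) :
    ‖𝓕 f w - 𝓕 g w‖ ≤ ∫ v, ‖f v - g v‖ := by
  have hsub : 𝓕 f w - 𝓕 g w = 𝓕 (fun v ↦ f v - g v) w := by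
    simp only [fourier_eq, smul_sub]
    rw [integral_sub ((fourierIntegral_convergent_iff w).mpr hf)
      ((fourierIntegral_convergent_iff w).mpr hg)]
  exact hsub ▸ norm_fourier_le_integral_norm _ w

lemma norm_fourier_le_integral_norm_sub_translate (hf : Integrable f) {w : V} (hw : w ≠ 0) :
    ‖𝓕 f w‖ ≤ 2⁻¹ * ∫ v, ‖f v - f (v + (1 / (2 * ‖w‖ ^ 2)) • w)‖ := by
  rw [fourier_eq, fourierIntegral_eq_half_sub_half_period_translate hw hf, norm_smul, norm_div,
    norm_one, Complex.norm_ofNat, one_div]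
  gcongr
  refine (norm_integral_le_integral_norm _).trans_eq ?_
  simp only [Circle.norm_smul]

end InnerProductSpace

variable {f : ℝ → E} {A B θ ξ : ℝ}

lemma norm_fourier_le_of_deriv_modulus (hf : Integrable f) (hdiff : Differentiable ℝ f)
    (hf' : Integrable (deriv f)) (hθ : 0 ≤ θ)
    (hB : ∀ h, |h| ≤ 1 → ∫ x, ‖deriv f x - deriv f (x + h)‖ ≤ B * |h| ^ θ) (hξ : 1 ≤ |ξ|) :
    ‖𝓕 f ξ‖ ≤ B * |ξ| ^ (-(1 + θ)) := by
  have hξ0 : 0 < |ξ| := one_pos.trans_le hξ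
  have hB0 : 0 ≤ B := by
    simpa using (integral_nonneg fun _ ↦ norm_nonneg _).trans (hB 1 (by simp))
  set h := 1 / (2 * ‖ξ‖ ^ 2) * ξ
  have hh : |h| ≤ |ξ|⁻¹ := by
    have : |h| = 2⁻¹ * |ξ|⁻¹ := by
      rw [abs_mul, abs_of_nonneg (by positivity), norm_eq_abs]
      field_simp
    rw [this]
    exact mul_le_of_le_one_left (by positivity) (by norm_num)
  have hderiv : ‖𝓕 (deriv f) ξ‖ ≤ B * |ξ| ^ (-θ) := by
    calc ‖𝓕 (deriv f) ξ‖ ≤ 2⁻¹ * ∫ x, ‖deriv f x - deriv f (x + h)‖ :=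
          norm_fourier_le_integral_norm_sub_translate hf' (abs_pos.mp hξ0)
      _ ≤ 1 * (B * |h| ^ θ) := by
          gcongr
          · norm_num
          · exact hB h (hh.trans (inv_le_one_of_one_le₀ hξ))
      _ ≤ B * |ξ| ^ (-θ) := by
          rw [one_mul, rpow_neg hξ0.le, ← inv_rpow hξ0.le]
          gcongr
  have hmul : |ξ| * ‖𝓕 f ξ‖ ≤ ‖𝓕 (deriv f) ξ‖ := by
    rw [fourier_deriv hf hdiff hf', norm_smul]
    gcongr
    simp only [norm_mul, Complex.norm_ofNat, Complex.norm_real, Complex.norm_I, mul_one,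
      norm_eq_abs, abs_of_pos pi_pos]
    exact le_mul_of_one_le_left hξ0.le (by linarith [pi_gt_three])
  calc ‖𝓕 f ξ‖ ≤ |ξ|⁻¹ * (B * |ξ| ^ (-θ)) := by
        rw [le_inv_mul_iff₀ hξ0]
        exact hmul.trans hderiv
    _ = B * |ξ| ^ (-(1 + θ)) := by
        rw [neg_add, rpow_add hξ0, rpow_neg_one]
        ring

lemma norm_fourier_le_one_add_norm_rpow (hf : Integrable f) (hdiff : Differentiable ℝ f)
    (hf' : Integrable (deriv f)) (hθ : 0 ≤ θ) (hA : ∫ x, ‖f x‖ ≤ A)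
    (hB : ∀ h, |h| ≤ 1 → ∫ x, ‖deriv f x - deriv f (x + h)‖ ≤ B * |h| ^ θ) (ξ : ℝ) :
    ‖𝓕 f ξ‖ ≤ 2 ^ (1 + θ) * max A B * (1 + ‖ξ‖) ^ (-(1 + θ)) := by
  have hA0 : 0 ≤ A := (integral_nonneg fun _ ↦ norm_nonneg _).trans hA
  have hmax : ‖𝓕 f ξ‖ ≤ max A B * max 1 |ξ| ^ (-(1 + θ)) := by
    rcases le_total |ξ| 1 with hξ | hξ
    · rw [max_eq_left hξ, one_rpow, mul_one]
      exact ((norm_fourier_le_integral_norm f ξ).trans hA).trans (le_max_left _ _)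
    · rw [max_eq_right hξ]
      refine (norm_fourier_le_of_deriv_modulus hf hdiff hf' hθ hB hξ).trans ?_
      gcongr
      exact le_max_right _ _
  have hcompare : max 1 |ξ| ^ (-(1 + θ)) ≤ 2 ^ (1 + θ) * (1 + ‖ξ‖) ^ (-(1 + θ)) := by
    rw [rpow_neg (by positivity), rpow_neg (by positivity), ← div_eq_mul_inv,
      ← div_rpow zero_le_two (by positivity), ← inv_rpow (by positivity)]
    refine rpow_le_rpow (by positivity) ?_ (by positivity)
    rw [inv_le_comm₀ (by positivity) (by positivity), inv_div, norm_eq_abs]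
    linarith [le_max_left 1 |ξ|, le_max_right 1 |ξ|]
  calc ‖𝓕 f ξ‖ ≤ max A B * max 1 |ξ| ^ (-(1 + θ)) := hmax
    _ ≤ max A B * (2 ^ (1 + θ) * (1 + ‖ξ‖) ^ (-(1 + θ))) := by gcongr
    _ = _ := by ring

theorem integrable_fourier_and_tendsto_integral_norm_fourier_sub {ι : Type*} {l : Filter ι}
    [l.NeBot] [l.IsCountablyGenerated] {F : ι → ℝ → E} {F₀ : ℝ → E}
    (hF : ∀ᶠ i in l, Integrable (F i)) (hF₀ : Integrable F₀)
    (hlim : Tendsto (fun i ↦ ∫ x, ‖F i x - F₀ x‖) l (𝓝 0))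
    (hdiff : ∀ᶠ i in l, Differentiable ℝ (F i)) (hF' : ∀ᶠ i in l, Integrable (deriv (F i)))
    (hθ : 0 < θ) (hB : ∀ᶠ i in l, ∀ h, |h| ≤ 1 →
      ∫ x, ‖deriv (F i) x - deriv (F i) (x + h)‖ ≤ B * |h| ^ θ) :
    (∀ᶠ i in l, Integrable (𝓕 (F i))) ∧ Integrable (𝓕 F₀) ∧
      Tendsto (fun i ↦ ∫ ξ, ‖𝓕 (F i) ξ - 𝓕 F₀ ξ‖) l (𝓝 0) := by
  have hpointwise (ξ : ℝ) : Tendsto (fun i ↦ 𝓕 (F i) ξ) l (𝓝 (𝓕 F₀ ξ)) := by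
    refine tendsto_iff_norm_sub_tendsto_zero.mpr (squeeze_zero' (.of_forall fun _ ↦ norm_nonneg _)
      (hF.mono fun i hi ↦ norm_fourier_sub_le hi hF₀ ξ) hlim)
  have hA : ∀ᶠ i in l, ∫ x, ‖F i x‖ ≤ 1 + ∫ x, ‖F₀ x‖ := by
    filter_upwards [hF, hlim.eventually_le_const one_pos] with i hi hle
    rw [← sub_le_iff_le_add, ← integral_sub hi.norm hF₀.norm]
    exact (integral_mono (hi.norm.sub hF₀.norm) (hi.sub hF₀).norm
      fun x ↦ norm_sub_norm_le _ _).trans hle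
  set M : ℝ → ℝ := fun ξ ↦ 2 ^ (1 + θ) * max (1 + ∫ x, ‖F₀ x‖) B * (1 + ‖ξ‖) ^ (-(1 + θ))
  have hM : ∀ᶠ i in l, ∀ ξ, ‖𝓕 (F i) ξ‖ ≤ M ξ := by
    filter_upwards [hF, hdiff, hF', hA, hB] with i hi hdi hi' hAi hBi
    exact norm_fourier_le_one_add_norm_rpow hi hdi hi' hθ.le hAi hBi
  have hM₀ (ξ : ℝ) : ‖𝓕 F₀ ξ‖ ≤ M ξ :=
    le_of_tendsto (hpointwise ξ).norm (hM.mono fun i hi ↦ hi ξ)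
  have hM_int : Integrable M :=
    (integrable_one_add_norm (by simpa using hθ)).const_mul _
  have hint : ∀ᶠ i in l, Integrable (𝓕 (F i)) := by
    filter_upwards [hF, hM] with i hi hMi
    exact hM_int.mono' (continuous_fourier_of_integrable hi).aestronglyMeasurable
      (ae_of_all _ hMi)
  have hint₀ : Integrable (𝓕 F₀) :=
    hM_int.mono' (continuous_fourier_of_integrable hF₀).aestronglyMeasurable (ae_of_all _ hM₀)
  exact ⟨hint, hint₀, tendsto_integral_norm_sub_of_dominated
    (hint.mono fun i hi ↦ hi.aestronglyMeasurable) hint₀.aestronglyMeasurable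
    (hM.mono fun i hi ↦ ae_of_all _ hi) (ae_of_all _ hM₀) hM_int (ae_of_all _ hpointwise)⟩

end FourierDecay

section Multiplicator

open Complex
open scoped FourierTransform

lemma integral_mul_exp_neg_eq_fourier (f : ℝ → ℂ) (t : ℝ) :
    ∫ ω : ℝ, f ω * exp (-I * ω * t) = 𝓕 f (t / (2 * Real.pi)) := by
  rw [Real.fourier_real_eq_integral_exp_smul]
  refine integral_congr_ae (ae_of_all _ fun ω ↦ ?_)
  have hexponent : -I * ω * t = ((-2 * Real.pi * ω * (t / (2 * Real.pi)) : ℝ) : ℂ) * I := by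
    have hpi : (Real.pi : ℂ) ≠ 0 := ofReal_ne_zero.mpr Real.pi_ne_zero
    push_cast
    field_simp
  beta_reduce
  rw [smul_eq_mul, hexponent, mul_comm (f ω)]

/-- The Fourier transform in the convention `t ↦ (1/2π) ∫ f(ω) e^{-iωt} dω` of the kernels
`M̌_{x,ε}`. -/
def rescaledFourier (f : ℝ → ℂ) (t : ℝ) : ℂ :=
  ((1 / (2 * Real.pi) : ℝ) : ℂ) * 𝓕 f (t / (2 * Real.pi))

lemma integrable_rescaledFourier {f : ℝ → ℂ} (hf : Integrable (𝓕 f)) :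
    Integrable (rescaledFourier f) :=
  (hf.comp_div Real.two_pi_pos.ne').const_mul _

lemma integral_norm_rescaledFourier_sub (f g : ℝ → ℂ) :
    ∫ t, ‖rescaledFourier f t - rescaledFourier g t‖ = ∫ ξ, ‖𝓕 f ξ - 𝓕 g ξ‖ := by
  have hpi : 0 < 2 * Real.pi := Real.two_pi_pos
  simp only [rescaledFourier, ← mul_sub, norm_mul, norm_real, Real.norm_eq_abs]
  rw [integral_const_mul, Measure.integral_comp_div (fun ξ ↦ ‖𝓕 f ξ - 𝓕 g ξ‖), smul_eq_mul,
    ← mul_assoc, ← abs_mul, one_div_mul_cancel hpi.ne', abs_one, one_mul]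

variable {m a ε : ℝ} {ζ : ℝ → ℂ}

lemma integrable_shiftedMultiplier (hm : 0 < m) (hε : 0 ≤ ε) (hζ : Continuous ζ)
    (hsupp : HasCompactSupport ζ) : Integrable (shiftedMultiplier m a ζ ε) :=
  (continuous_shiftedMultiplier hm hε hζ).integrable_of_hasCompactSupport hsupp.mul_left

lemma integrable_deriv_shiftedMultiplier (hm : 0 < m) (hε : 0 < ε) (hζ : Differentiable ℝ ζ)
    (hζ' : Continuous (deriv ζ)) (hsupp : HasCompactSupport ζ) :
    Integrable (deriv (shiftedMultiplier m a ζ ε)) :=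
  (continuous_deriv_shiftedMultiplier hm hε hζ hζ').integrable_of_hasCompactSupport
    (.deriv hsupp.mul_left)

lemma tendsto_integral_norm_shiftedMultiplier_sub (hm : 0 < m) (ha : 0 ≤ a) (hζ : Continuous ζ)
    (hsupp : HasCompactSupport ζ) :
    Tendsto (fun ε ↦ ∫ ω, ‖shiftedMultiplier m a ζ ε ω - shiftedMultiplier m a ζ 0 ω‖)
      (𝓝[>] 0) (𝓝 0) := by
  have hpos : ∀ᶠ ε : ℝ in 𝓝[>] 0, 0 ≤ ε :=
    eventually_mem_nhdsWithin.mono fun ε (hε : 0 < ε) ↦ hε.le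
  exact tendsto_integral_norm_sub_of_dominated
    (hpos.mono fun ε hε ↦ (continuous_shiftedMultiplier hm hε hζ).aestronglyMeasurable)
    (continuous_shiftedMultiplier hm le_rfl hζ).aestronglyMeasurable
    (hpos.mono fun ε hε ↦ ae_of_all _ (norm_shiftedMultiplier_le hm ha hε))
    (ae_of_all _ (norm_shiftedMultiplier_le hm ha le_rfl))
    (hζ.integrable_of_hasCompactSupport hsupp).norm
    (ae_of_all _ (tendsto_shiftedMultiplier hm))

end Multiplicator

theorem multiplicator_L1_convergence_general
    (m : ℝ) (hm : 0 < m)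
    (ζ : ℝ → ℂ) (hζ : Differentiable ℝ ζ) {K : NNReal} (hζ' : LipschitzWith K (deriv ζ))
    (hζsupp : HasCompactSupport ζ)
    (x : ℝ)
    (Mx : ℝ → ℝ → ℂ)
    (hMx : ∀ ε t : ℝ, Mx ε t = ((1 / (2 * Real.pi) : ℝ) : ℂ)
      * ∫ ω : ℝ, Complex.exp (Complex.I * kCl m ((ω:ℂ) + Complex.I * (ε:ℂ))
            * ((|x| : ℝ) : ℂ))
          * ζ ω * Complex.exp (-Complex.I * (ω:ℂ) * (t:ℂ))) :
    (∀ᶠ ε in 𝓝[>] (0 : ℝ), Integrable (Mx ε)) ∧ Integrable (Mx 0) ∧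
      Tendsto (fun ε : ℝ => ∫ t : ℝ, ‖Mx ε t - Mx 0 t‖) (𝓝[>] (0:ℝ)) (𝓝 0) := by
  have ha : 0 ≤ |x| := abs_nonneg x
  have hM (ε : ℝ) : Mx ε = rescaledFourier (shiftedMultiplier m |x| ζ ε) := by
    funext t
    rw [hMx, rescaledFourier, ← integral_mul_exp_neg_eq_fourier]
    rfl
  obtain ⟨B, hB⟩ := exists_integral_norm_deriv_sub_translate_le hm ha hζ hζ' hζsupp
  have hpos : ∀ᶠ ε : ℝ in 𝓝[>] 0, ε ∈ Set.Ioc 0 1 := Ioc_mem_nhdsGT one_pos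
  obtain ⟨hint, hint₀, hlim⟩ := integrable_fourier_and_tendsto_integral_norm_fourier_sub
    (hpos.mono fun ε hε ↦ integrable_shiftedMultiplier hm hε.1.le hζ.continuous hζsupp)
    (integrable_shiftedMultiplier hm le_rfl hζ.continuous hζsupp)
    (tendsto_integral_norm_shiftedMultiplier_sub hm ha hζ.continuous hζsupp)
    (hpos.mono fun ε hε ω ↦ (hasDerivAt_shiftedMultiplier hm.ne' hε.1 (hζ ω)).differentiableAt)
    (hpos.mono fun ε hε ↦
      integrable_deriv_shiftedMultiplier hm hε.1 hζ hζ'.continuous hζsupp)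
    (by norm_num : (0 : ℝ) < 1 / 4) (hpos.mono hB)
  simp only [hM, integral_norm_rescaledFourier_sub]
  exact ⟨hint.mono fun ε hε ↦ integrable_rescaledFourier hε, integrable_rescaledFourier hint₀,
    hlim⟩

/-- `L¹`-convergence of the multiplicator kernels
`M̌_{x,ε} → M̌_{x,0}` as `ε → 0+`, where
`M̌_{x,ε}(t) = (1/2π)∫ e^{ik(ω+iε)|x|} ζ(ω) e^{−iωt} dω`. -/
theorem multiplicator_L1_convergence
    (m : ℝ) (hm : 0 < m)
    (ζ : ℝ → ℂ) (hζ : ContDiff ℝ (⊤ : ℕ∞) ζ) (hζsupp : HasCompactSupport ζ)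
    (x : ℝ)
    (Mx : ℝ → ℝ → ℂ)
    (hMx : ∀ ε t : ℝ, Mx ε t = ((1 / (2 * Real.pi) : ℝ) : ℂ)
      * ∫ ω : ℝ, Complex.exp (Complex.I * kCl m ((ω:ℂ) + Complex.I * (ε:ℂ))
            * ((|x| : ℝ) : ℂ))
          * ζ ω * Complex.exp (-Complex.I * (ω:ℂ) * (t:ℂ))) :
    Tendsto (fun ε : ℝ => ∫ t : ℝ, ‖Mx ε t - Mx 0 t‖) (𝓝[>] (0:ℝ)) (𝓝 0) := by
  obtain ⟨hdiff, hderiv⟩ := contDiff_infty_iff_deriv.mp hζ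
  obtain ⟨K, hK⟩ := hderiv.lipschitzWith_of_hasCompactSupport hζsupp.deriv (by simp)
  exact (multiplicator_L1_convergence_general m hm ζ hdiff hK hζsupp x Mx hMx).2.2
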